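/- arXiv:1111.0317 — 2 statements merged into one kernel-verified Lean document; each statement's English description precedes it below -/
import Mathlib

section
/- Let C be a p×p symmetric positive-definite correlation matrix, Z ~ N_p(0, C), F_1, …, F_p cdfs on ℝ, and Y_j = F_j⁻(Φ(Z_j)). Fix j ≠ j′. (i) If c_{jj′} = 0 then Y_j and Y_{j′} are independent. (ii) If moreover F_j and F_{j′} are continuous (and non-degenerate), then Y_j and Y_{j′} are independent only if c_{jj′} = 0. Hence for continuous margins, Y_j ⊥ Y_{j′} if and only if c_{jj′} = 0. -/
open MeasureTheory Matrix Real Filter ProbabilityTheory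

/-- Density of the centered multivariate Gaussian with covariance `S`. -/
noncomputable def gaussPdf {ι : Type*} [Fintype ι] [DecidableEq ι]
    (S : Matrix ι ι ℝ) (x : ι → ℝ) : ℝ :=
  Real.exp (-(x ⬝ᵥ S⁻¹.mulVec x) / 2) / Real.sqrt ((2 * π) ^ Fintype.card ι * S.det)

/-- The centered multivariate Gaussian measure `N(0, S)` on `ι → ℝ`. -/
noncomputable def gaussianMeasure {ι : Type*} [Fintype ι] [DecidableEq ι]
    (S : Matrix ι ι ℝ) : Measure (ι → ℝ) :=
  volume.withDensity fun x => ENNReal.ofReal (gaussPdf S x)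

/-- A cumulative distribution function on ℝ. -/
def IsCDF (F : ℝ → ℝ) : Prop :=
  Monotone F ∧ (∀ x, ContinuousWithinAt F (Set.Ici x) x) ∧
    Tendsto F atBot (nhds 0) ∧ Tendsto F atTop (nhds 1)

/-- `F` is the cdf of a point mass at some `a`. -/
def IsDegenerateCDF (F : ℝ → ℝ) : Prop :=
  ∃ a : ℝ, ∀ t, F t = if a ≤ t then (1 : ℝ) else 0

/-- The pseudo-inverse `F⁻(u) = inf {y : F y ≥ u}` of a cdf. -/
noncomputable def pseudoInv (F : ℝ → ℝ) (u : ℝ) : ℝ := sInf {y : ℝ | u ≤ F y}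

/-- Standard normal cdf `Φ`. -/
noncomputable def Phi (x : ℝ) : ℝ :=
  (ProbabilityTheory.gaussianReal 0 1 (Set.Iic x)).toReal

/-!
If `C i j = 0`, the Gaussian pair `(Z i, Z j)` is uncorrelated, hence independent, and so are its
images under measurable maps. For the converse, write `Z j = k * Z i + V` with `V` independent of
`Z i` and `k ≠ 0`. A non-degenerate cdf takes a value in `(0, 1) = range Φ`, so some half-line
event of `Y i` is `A = {Z i ≤ a}` and some half-line event of `Y j` is `B = {Z j ≤ b}`. If `0 < k`,
the event `D = {V ≤ b - k * a}`, which is independent of `A`, satisfies `D ⊆ B` on `A` and `B ⊆ D`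
on `Aᶜ`. Were `B` also independent of `A`, the first inclusion would give `P D ≤ P B` and the second
`P B < P D`, because `(Z i, Z j)` charges the open wedge `D \ B` inside `Aᶜ`. If `k < 0`, exchange
`A` and `Aᶜ`.
-/

section Cdf

lemma strictMono_cdf (μ : Measure ℝ) [IsProbabilityMeasure μ] [μ.IsOpenPosMeasure] :
    StrictMono (cdf μ) := fun a b hab ↦ by
  have hIoo : 0 < μ.real (Set.Ioo a b) :=
    ENNReal.toReal_pos (isOpen_Ioo.measure_ne_zero μ (Set.nonempty_Ioo.2 hab)) (measure_ne_top _ _)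
  have hunion := measureReal_union (μ := μ)
    ((Set.Iic_disjoint_Ioc le_rfl).mono_right Set.Ioo_subset_Ioc_self)
    (measurableSet_Ioo (a := a) (b := b))
  rw [cdf_eq_real, cdf_eq_real]
  refine ((lt_add_of_pos_right _ hIoo).trans_eq hunion.symm).trans_le (measureReal_mono ?_)
  exact Set.union_subset (Set.Iic_subset_Iic.2 hab.le) fun x hx ↦ hx.2.le

lemma continuous_cdf (μ : Measure ℝ) [IsProbabilityMeasure μ] [NullSingletonClass μ] :
    Continuous (cdf μ) := continuous_iff_continuousAt.2 fun x ↦ by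
  rw [(monotone_cdf μ).continuousAt_iff_leftLim_eq_rightLim, StieltjesFunction.rightLim_eq]
  have hx := (cdf μ).measure_singleton x
  rw [measure_cdf, measure_singleton, eq_comm, ENNReal.ofReal_eq_zero, sub_nonpos] at hx
  exact ((monotone_cdf μ).leftLim_le le_rfl).antisymm hx

lemma range_cdf (μ : Measure ℝ) [IsProbabilityMeasure μ] [μ.IsOpenPosMeasure]
    [NullSingletonClass μ] : Set.range (cdf μ) = Set.Ioo 0 1 := by
  refine Set.Subset.antisymm (Set.range_subset_iff.2 fun x ↦ ⟨?_, ?_⟩) fun u hu ↦ ?_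
  · exact (cdf_nonneg μ _).trans_lt (strictMono_cdf μ (sub_one_lt x))
  · exact (strictMono_cdf μ (lt_add_one x)).trans_le (cdf_le_one μ _)
  · refine mem_range_of_exists_le_of_exists_ge (continuous_cdf μ) ?_ ?_
    · exact ((tendsto_cdf_atBot μ).eventually_le_const hu.1).exists
    · exact ((tendsto_cdf_atTop μ).eventually_const_le hu.2).exists

lemma isOpenPosMeasure_gaussianReal (m : ℝ) {v : NNReal} (hv : v ≠ 0) :
    (gaussianReal m v).IsOpenPosMeasure :=
  (gaussianReal_absolutelyContinuous' m hv).isOpenPosMeasure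

lemma Phi_eq_cdf : Phi = cdf (gaussianReal 0 1) := funext fun x ↦ (cdf_eq_real _ x).symm

lemma strictMono_Phi : StrictMono Phi := by
  have := isOpenPosMeasure_gaussianReal 0 one_ne_zero
  exact Phi_eq_cdf ▸ strictMono_cdf _

lemma range_Phi : Set.range Phi = Set.Ioo 0 1 := by
  have := isOpenPosMeasure_gaussianReal 0 one_ne_zero
  have := nullSingletonClass_gaussianReal (μ := 0) one_ne_zero
  exact Phi_eq_cdf ▸ range_cdf _

lemma Phi_mem_Ioo (x : ℝ) : Phi x ∈ Set.Ioo 0 1 := range_Phi ▸ Set.mem_range_self x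

end Cdf

section PseudoInverse

variable {F : ℝ → ℝ} {u : ℝ}

lemma IsCDF.bddBelow_setOf_le (hF : IsCDF F) (hu : 0 < u) : BddBelow {y | u ≤ F y} := by
  obtain ⟨b, hb⟩ := (hF.2.2.1.eventually_lt_const hu).exists
  exact ⟨b, fun y hy ↦ (hF.1.reflect_lt (hb.trans_le hy)).le⟩

lemma IsCDF.nonempty_setOf_le (hF : IsCDF F) (hu : u < 1) : {y | u ≤ F y}.Nonempty :=
  (hF.2.2.2.eventually_const_le hu).exists

lemma IsCDF.pseudoInv_le_iff (hF : IsCDF F) (hu : u ∈ Set.Ioo 0 1) {t : ℝ} :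
    pseudoInv F u ≤ t ↔ u ≤ F t := by
  refine ⟨fun h ↦ ?_, fun h ↦ csInf_le (hF.bddBelow_setOf_le hu.1) h⟩
  have hright : ∀ s ∈ Set.Ioi t, u ≤ F s := fun s hs ↦ by
    obtain ⟨y, hy, hys⟩ := exists_lt_of_csInf_lt (hF.nonempty_setOf_le hu.2) (h.trans_lt hs)
    exact le_trans hy (hF.1 hys.le)
  exact ge_of_tendsto ((hF.2.1 t).mono Set.Ioi_subset_Ici_self)
    (eventually_nhdsWithin_of_forall hright)

lemma IsCDF.exists_mem_Ioo_of_not_isDegenerateCDF (hF : IsCDF F) (hdeg : ¬ IsDegenerateCDF F) :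
    ∃ t, F t ∈ Set.Ioo 0 1 := by
  by_contra! h
  refine hdeg ⟨pseudoInv F (1 / 2), fun t ↦ ?_⟩
  have h0 : 0 ≤ F t := hF.1.le_of_tendsto hF.2.2.1 t
  have h1 : F t ≤ 1 := hF.1.ge_of_tendsto hF.2.2.2 t
  rw [if_congr (hF.pseudoInv_le_iff ⟨one_half_pos, one_half_lt_one⟩) rfl rfl]
  rcases h0.eq_or_lt with h0 | h0
  · norm_num [← h0]
  · norm_num [h1.antisymm (not_lt.1 fun h1 ↦ h t ⟨h0, h1⟩)]

lemma IsCDF.monotone_pseudoInv_comp_Phi (hF : IsCDF F) : Monotone fun x ↦ pseudoInv F (Phi x) :=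
  fun _ b hab ↦ csInf_le_csInf (hF.bddBelow_setOf_le (Phi_mem_Ioo _).1)
    (hF.nonempty_setOf_le (Phi_mem_Ioo b).2) fun _ hy ↦ (strictMono_Phi.monotone hab).trans hy

lemma IsCDF.exists_forall_pseudoInv_Phi_le_iff (hF : IsCDF F) (hdeg : ¬ IsDegenerateCDF F) :
    ∃ t a, ∀ x, pseudoInv F (Phi x) ≤ t ↔ x ≤ a := by
  obtain ⟨t, ht⟩ := hF.exists_mem_Ioo_of_not_isDegenerateCDF hdeg
  obtain ⟨a, ha⟩ := range_Phi.symm ▸ ht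
  exact ⟨t, a, fun x ↦ by
    rw [hF.pseudoInv_le_iff (Phi_mem_Ioo x), ← ha, strictMono_Phi.le_iff_le]⟩

end PseudoInverse

section GaussianMeasure

variable {ι : Type*} [Fintype ι] [DecidableEq ι] {S : Matrix ι ι ℝ}

lemma gaussPdf_pos (hS : S.PosDef) (x : ι → ℝ) : 0 < gaussPdf S x := by
  have := hS.det_pos
  unfold gaussPdf
  positivity

lemma continuous_gaussPdf (S : Matrix ι ι ℝ) : Continuous (gaussPdf S) := by
  unfold gaussPdf
  fun_prop

lemma gaussPdf_one (x : ι → ℝ) : gaussPdf 1 x = ∏ i, gaussianPDFReal 0 1 (x i) := by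
  have hsqrt : √((2 * π) ^ Fintype.card ι) = √(2 * π) ^ Fintype.card ι := by
    rw [Real.sqrt_eq_iff_mul_self_eq (by positivity) (by positivity), ← mul_pow,
      Real.mul_self_sqrt (by positivity)]
  simp only [gaussPdf, gaussianPDFReal, Finset.prod_mul_distrib, ← Real.exp_sum]
  simp only [dotProduct, inv_one, one_mulVec, det_one, mul_one, hsqrt, Finset.prod_const,
    Finset.card_univ, NNReal.coe_one, sub_zero, ← Finset.sum_div, Finset.sum_neg_distrib, pow_two]
  rw [div_eq_inv_mul, inv_pow]

lemma gaussianMeasure_one :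
    gaussianMeasure (1 : Matrix ι ι ℝ) = Measure.pi fun _ ↦ gaussianReal 0 1 := by
  refine (Measure.pi_eq fun s hs ↦ ?_).symm
  rw [gaussianMeasure, withDensity_apply _ (MeasurableSet.univ_pi hs),
    volume_pi, Measure.restrict_pi_pi]
  simp_rw [gaussPdf_one]
  rw [← ofReal_integral_eq_lintegral_ofReal, integral_fintype_prod_eq_prod (𝕜 := ℝ),
    ENNReal.ofReal_prod_of_nonneg]
  · simp_rw [gaussianReal_apply_eq_integral 0 one_ne_zero]
  · exact fun i _ ↦ integral_nonneg fun x ↦ gaussianPDFReal_nonneg 0 1 x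
  · exact Integrable.fintype_prod fun i ↦ (integrable_gaussianPDFReal 0 1).restrict
  · exact ae_of_all _ fun x ↦ Finset.prod_nonneg fun i _ ↦ gaussianPDFReal_nonneg 0 1 _

lemma dotProduct_inv_mulVec_conj {R : Type*} [CommRing R] {A : Matrix ι ι R} (hA : IsUnit A.det)
    (S : Matrix ι ι R) (x : ι → R) :
    (A *ᵥ x) ⬝ᵥ (A * S * Aᵀ)⁻¹ *ᵥ (A *ᵥ x) = x ⬝ᵥ S⁻¹ *ᵥ x := by
  have hinv : Aᵀ * (A * S * Aᵀ)⁻¹ * A = S⁻¹ := by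
    rw [Matrix.mul_inv_rev, Matrix.mul_inv_rev, ← Matrix.mul_assoc,
      mul_nonsing_inv _ (by rwa [det_transpose]), Matrix.one_mul, Matrix.mul_assoc,
      nonsing_inv_mul _ hA, Matrix.mul_one]
  nth_rewrite 1 [← vecMul_transpose]
  rw [← dotProduct_mulVec, mulVec_mulVec, mulVec_mulVec, hinv]

lemma abs_det_mul_gaussPdf_conj {A : Matrix ι ι ℝ} (hA : A.det ≠ 0) (S : Matrix ι ι ℝ)
    (x : ι → ℝ) : |A.det| * gaussPdf (A * S * Aᵀ) (A *ᵥ x) = gaussPdf S x := by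
  have hdet : (2 * π) ^ Fintype.card ι * (A * S * Aᵀ).det =
      A.det * A.det * ((2 * π) ^ Fintype.card ι * S.det) := by
    rw [det_mul, det_mul, det_transpose]
    ring
  rw [gaussPdf, gaussPdf, dotProduct_inv_mulVec_conj hA.isUnit, hdet,
    Real.sqrt_mul (mul_self_nonneg _), Real.sqrt_mul_self_eq_abs, ← mul_div_assoc,
    mul_div_mul_left _ _ (abs_ne_zero.2 hA)]

lemma map_mulVec_volume {A : Matrix ι ι ℝ} (hA : A.det ≠ 0) :
    ENNReal.ofReal |A.det| • (volume : Measure (ι → ℝ)).map (A *ᵥ ·) = volume := by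
  have h : (volume : Measure (ι → ℝ)).map (A *ᵥ ·) = _ :=
    Real.map_matrix_volume_pi_eq_smul_volume_pi hA
  rw [h, smul_smul, ← ENNReal.ofReal_mul (abs_nonneg _), ← abs_mul, mul_inv_cancel₀ hA, abs_one,
    ENNReal.ofReal_one, one_smul]

lemma map_mulVec_gaussianMeasure {A : Matrix ι ι ℝ} (hA : A.det ≠ 0) (S : Matrix ι ι ℝ) :
    (gaussianMeasure S).map (A *ᵥ ·) = gaussianMeasure (A * S * Aᵀ) := by
  have hmul : Measurable (A *ᵥ · : (ι → ℝ) → ι → ℝ) := by fun_prop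
  have hpdf := (continuous_gaussPdf (A * S * Aᵀ)).measurable.ennreal_ofReal
  ext s hs
  rw [Measure.map_apply hmul hs, gaussianMeasure, gaussianMeasure,
    withDensity_apply _ (hmul hs), withDensity_apply _ hs]
  nth_rewrite 2 [← map_mulVec_volume hA]
  rw [Measure.restrict_smul, lintegral_smul_measure, Measure.restrict_map hmul hs,
    lintegral_map hpdf hmul, smul_eq_mul, ← lintegral_const_mul _ (by exact hpdf.comp hmul)]
  simp_rw [← ENNReal.ofReal_mul (abs_nonneg _), abs_det_mul_gaussPdf_conj hA]

open scoped MatrixOrder Matrix.Norms.L2Operator in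
lemma gaussianMeasure_eq_map_multivariateGaussian (hS : S.PosDef) :
    gaussianMeasure S = (multivariateGaussian 0 S).map WithLp.ofLp := by
  have hsq : CFC.sqrt S * 1 * (CFC.sqrt S)ᵀ = S := by
    rw [Matrix.mul_one, ← conjTranspose_eq_transpose_of_trivial,
      (CFC.sqrt_nonneg S).posSemidef.isHermitian.eq, CFC.sqrt_mul_sqrt_self _ hS.posSemidef.nonneg]
  have hdet : (CFC.sqrt S).det ≠ 0 := fun h ↦ hS.det_pos.ne' <| by
    rw [← hsq, det_mul, det_mul, h, zero_mul, zero_mul]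
  conv_lhs => rw [← hsq]
  rw [← map_mulVec_gaussianMeasure hdet, multivariateGaussian, ← map_pi_eq_stdGaussian,
    Measure.map_map (by fun_prop) (by fun_prop), Measure.map_map (by fun_prop) (by fun_prop),
    gaussianMeasure_one]
  congr 1
  ext x i
  simp

lemma isGaussian_gaussianMeasure (hS : S.PosDef) : IsGaussian (gaussianMeasure S) := by
  rw [gaussianMeasure_eq_map_multivariateGaussian hS]
  exact (IsGaussian.hasGaussianLaw_id.map_equiv
    (PiLp.continuousLinearEquiv 2 ℝ fun _ : ι ↦ ℝ)).isGaussian_map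

lemma covariance_eval_gaussianMeasure (hS : S.PosDef) (i j : ι) :
    cov[fun x ↦ x i, fun x ↦ x j; gaussianMeasure S] = S i j := by
  rw [gaussianMeasure_eq_map_multivariateGaussian hS,
    covariance_map_fun (measurable_pi_apply i).aestronglyMeasurable
      (measurable_pi_apply j).aestronglyMeasurable (by fun_prop)]
  exact covariance_eval_multivariateGaussian hS.posSemidef i j

lemma isOpenPosMeasure_gaussianMeasure (hS : S.PosDef) : (gaussianMeasure S).IsOpenPosMeasure := by
  have hac : (volume : Measure (ι → ℝ)) ≪ gaussianMeasure S :=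
    withDensity_absolutelyContinuous' (continuous_gaussPdf S).measurable.ennreal_ofReal.aemeasurable
      (ae_of_all _ fun x ↦ (ENNReal.ofReal_pos.2 (gaussPdf_pos hS x)).ne')
  exact hac.isOpenPosMeasure

end GaussianMeasure

section Independence

variable {Ω : Type*} [MeasurableSpace Ω] {P : Measure Ω} {A B D : Set Ω}

lemma indepSet_compl_left (h : IndepSet A B P) : IndepSet Aᶜ B P :=
  ((IndepSet_iff_Indep A B P).1 h).indepSet_of_measurableSet
    (MeasurableSpace.measurableSet_generateFrom (Set.mem_singleton _)).compl
    (MeasurableSpace.measurableSet_generateFrom (Set.mem_singleton _))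

lemma indepSet_preimage_of_indepFun {β γ : Type*} [MeasurableSpace β] [MeasurableSpace γ]
    {X : Ω → β} {Y : Ω → γ} (h : IndepFun X Y P) {s : Set β} {t : Set γ} (hs : MeasurableSet s)
    (ht : MeasurableSet t) : IndepSet (X ⁻¹' s) (Y ⁻¹' t) P :=
  ((IndepFun_iff_Indep X Y P).1 h).indepSet_of_measurableSet ⟨s, hs, rfl⟩ ⟨t, ht, rfl⟩

lemma measureReal_inter_eq_mul_of_indepSet (h : IndepSet A B P) :
    P.real (A ∩ B) = P.real A * P.real B := by
  simp only [measureReal_def, h.measure_inter_eq_mul, ENNReal.toReal_mul]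

lemma not_indepSet_of_indepSet_of_inter_subset [IsFiniteMeasure P] (hB : NullMeasurableSet B P)
    (hAD : IndepSet A D P) (hA : P A ≠ 0) (hADB : A ∩ D ⊆ B) (hABD : Aᶜ ∩ B ⊆ D)
    (hDB : P (Aᶜ ∩ (D \ B)) ≠ 0) : ¬ IndepSet A B P := fun hAB ↦ by
  have hle : P.real D ≤ P.real B := by
    refine le_of_mul_le_mul_left ?_ (ENNReal.toReal_pos hA (measure_ne_top _ _))
    rw [← measureReal_def, ← measureReal_inter_eq_mul_of_indepSet hAD,
      ← measureReal_inter_eq_mul_of_indepSet hAB]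
    exact measureReal_mono (Set.subset_inter Set.inter_subset_left hADB)
  have hlt : P.real (Aᶜ ∩ B) < P.real (Aᶜ ∩ D) := by
    have hpos : 0 < P.real (Aᶜ ∩ (D \ B)) := ENNReal.toReal_pos hDB (measure_ne_top _ _)
    have hmono : P.real (Aᶜ ∩ B) ≤ P.real (Aᶜ ∩ D ∩ B) :=
      measureReal_mono fun ω h ↦ ⟨⟨h.1, hABD h⟩, h.2⟩
    have hsplit := measureReal_inter_add_sdiff₀ (μ := P) (s := Aᶜ ∩ D) hB
    rw [Set.inter_sdiff_assoc] at hsplit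
    linarith
  rw [measureReal_inter_eq_mul_of_indepSet (indepSet_compl_left hAB),
    measureReal_inter_eq_mul_of_indepSet (indepSet_compl_left hAD)] at hlt
  exact hlt.not_ge (mul_le_mul_of_nonneg_left hle measureReal_nonneg)

lemma measure_ne_zero_of_isOpen_of_preimage_subset {E : Type*} [TopologicalSpace E]
    [MeasurableSpace E] [OpensMeasurableSpace E] {T : Ω → E} (hT : AEMeasurable T P)
    (hopen : (P.map T).IsOpenPosMeasure) {U : Set E} (hU : IsOpen U) (hne : U.Nonempty)
    (hUA : T ⁻¹' U ⊆ A) : P A ≠ 0 := fun hA ↦ by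
  refine hU.measure_ne_zero (P.map T) hne ?_
  rw [Measure.map_apply_of_aemeasurable hT hU.measurableSet]
  exact measure_mono_null hUA hA

lemma isOpenPosMeasure_map_eval_eval {ι : Type*} [Countable ι] {Z : Ω → ι → ℝ}
    (hZmeas : AEMeasurable Z P) (hopen : (P.map Z).IsOpenPosMeasure) {i j : ι}
    (hij : i ≠ j) : (P.map fun ω ↦ (Z ω i, Z ω j)).IsOpenPosMeasure := by
  classical
  have hcont : Continuous fun z : ι → ℝ ↦ (z i, z j) := by fun_prop
  have hsurj : Function.Surjective fun z : ι → ℝ ↦ (z i, z j) := fun q ↦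
    ⟨Function.update (fun _ ↦ q.2) i q.1, by simp [hij.symm]⟩
  have hmap : (P.map Z).map (fun z ↦ (z i, z j)) = P.map fun ω ↦ (Z ω i, Z ω j) :=
    AEMeasurable.map_map_of_aemeasurable hcont.aemeasurable hZmeas
  exact hmap ▸ hcont.isOpenPosMeasure_map hsurj

variable {X W : Ω → ℝ} {k : ℝ}

lemma not_indepSet_preimage_of_indepFun_sub_mul [IsFiniteMeasure P] (hX : AEMeasurable X P)
    (hW : AEMeasurable W P) (hopen : (P.map fun ω ↦ (X ω, W ω)).IsOpenPosMeasure)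
    (hind : IndepFun X (fun ω ↦ W ω - k * X ω) P) {I : Set ℝ} {c : ℝ} (hI : MeasurableSet I)
    (hle : ∀ x ∈ I, k * x ≤ c) (hge : ∀ x ∈ Iᶜ, c ≤ k * x) (hint : (interior I).Nonempty)
    (hlt : ∃ x ∈ interior Iᶜ, c < k * x) (b : ℝ) :
    ¬ IndepSet (X ⁻¹' I) {ω | W ω ≤ b} P := by
  have hXW : AEMeasurable (fun ω ↦ (X ω, W ω)) P := hX.prodMk hW
  have hID : IndepSet (X ⁻¹' I) {ω | W ω - k * X ω ≤ b - c} P :=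
    indepSet_preimage_of_indepFun hind hI measurableSet_Iic
  refine not_indepSet_of_indepSet_of_inter_subset (nullMeasurableSet_le hW aemeasurable_const) hID
    ?_ (fun ω ⟨hω, hD⟩ ↦ ?_) (fun ω ⟨hω, hB⟩ ↦ ?_) ?_
  · obtain ⟨x, hx⟩ := hint
    exact measure_ne_zero_of_isOpen_of_preimage_subset hXW hopen
      (isOpen_interior.preimage continuous_fst) ⟨(x, 0), hx⟩
      fun ω hω ↦ interior_subset (s := I) hω
  · have := hle _ hω
    simp only [Set.mem_ofPred_eq] at hD ⊢
    linarith
  · have := hge _ hω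
    simp only [Set.mem_ofPred_eq] at hB ⊢
    linarith
  · obtain ⟨x, hx, hcx⟩ := hlt
    have hV : IsOpen {z : ℝ × ℝ | z.2 - k * z.1 < b - c} := isOpen_lt (by fun_prop) (by fun_prop)
    have hU : IsOpen {z : ℝ × ℝ | z.1 ∈ interior Iᶜ ∧ z.2 - k * z.1 < b - c ∧ b < z.2} :=
      (isOpen_interior.preimage continuous_fst).inter
        (hV.inter (isOpen_lt continuous_const continuous_snd))
    refine measure_ne_zero_of_isOpen_of_preimage_subset hXW hopen hU
      ⟨(x, b + (k * x - c) / 2), hx, ?_, ?_⟩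
      fun ω ⟨hω, hD, hB⟩ ↦ ⟨interior_subset (s := Iᶜ) hω, hD.le, hB.not_ge⟩ <;> linarith

lemma not_indepSet_le_of_indepFun_sub_mul [IsFiniteMeasure P] (hX : AEMeasurable X P)
    (hW : AEMeasurable W P) (hopen : (P.map fun ω ↦ (X ω, W ω)).IsOpenPosMeasure) (hk : k ≠ 0)
    (hind : IndepFun X (fun ω ↦ W ω - k * X ω) P) (a b : ℝ) :
    ¬ IndepSet {ω | X ω ≤ a} {ω | W ω ≤ b} P := by
  rcases hk.lt_or_gt with hk | hk
  · refine fun h ↦ not_indepSet_preimage_of_indepFun_sub_mul hX hW hopen hind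
      (I := (Set.Iic a)ᶜ) (c := k * a) measurableSet_Iic.compl (fun x hx ↦ ?_) (fun x hx ↦ ?_)
      ?_ ⟨a - 1, ?_, ?_⟩ b (indepSet_compl_left h)
    · exact mul_le_mul_of_nonpos_left (Set.notMem_Iic.1 hx).le hk.le
    · exact mul_le_mul_of_nonpos_left (not_not.1 hx) hk.le
    · simp
    · simp
    · exact mul_lt_mul_of_neg_left (sub_one_lt a) hk
  · refine not_indepSet_preimage_of_indepFun_sub_mul hX hW hopen hind
      (I := Set.Iic a) (c := k * a) measurableSet_Iic (fun x hx ↦ ?_) (fun x hx ↦ ?_)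
      ?_ ⟨a + 1, ?_, ?_⟩ b
    · exact mul_le_mul_of_nonneg_left hx hk.le
    · exact mul_le_mul_of_nonneg_left (Set.notMem_Iic.1 hx).le hk.le
    · simp
    · simp
    · exact mul_lt_mul_of_pos_left (lt_add_one a) hk

lemma indepFun_sub_covariance_div_variance_mul
    (hXW : HasGaussianLaw (fun ω ↦ (X ω, W ω)) P) (hX : Var[X; P] ≠ 0) :
    IndepFun X (fun ω ↦ W ω - cov[X, W; P] / Var[X; P] * X ω) P := by
  have := hXW.isProbabilityMeasure
  set k := cov[X, W; P] / Var[X; P] with hk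
  have hXV : HasGaussianLaw (fun ω ↦ (X ω, W ω - k * X ω)) P := hXW.map_fun
    ((ContinuousLinearMap.fst ℝ ℝ ℝ).prod
      (ContinuousLinearMap.snd ℝ ℝ ℝ - k • ContinuousLinearMap.fst ℝ ℝ ℝ))
  refine hXV.indepFun_of_covariance_eq_zero ?_
  rw [covariance_fun_sub_right hXW.fst.memLp_two hXW.snd.memLp_two
    (hXW.fst.memLp_two.const_mul k), covariance_const_mul_right,
    covariance_self hXW.fst.aemeasurable, hk, div_mul_cancel₀ _ hX, sub_self]

end Independence

section GaussianVector

variable {ι : Type*} [Fintype ι] [DecidableEq ι] {C : Matrix ι ι ℝ} {Ω : Type*}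
  [MeasurableSpace Ω] {P : Measure Ω} {Z : Ω → ι → ℝ}

lemma hasGaussianLaw_of_map_eq_gaussianMeasure (hC : C.PosDef) (hZ : P.map Z = gaussianMeasure C) :
    HasGaussianLaw Z P :=
  ⟨hZ ▸ isGaussian_gaussianMeasure hC⟩

lemma covariance_eval_of_map_eq_gaussianMeasure (hC : C.PosDef)
    (hZ : P.map Z = gaussianMeasure C) (i j : ι) :
    cov[fun ω ↦ Z ω i, fun ω ↦ Z ω j; P] = C i j := by
  have hZmeas := (hasGaussianLaw_of_map_eq_gaussianMeasure hC hZ).aemeasurable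
  rw [← covariance_eval_gaussianMeasure hC, ← hZ,
    covariance_map_fun (measurable_pi_apply i).aestronglyMeasurable
      (measurable_pi_apply j).aestronglyMeasurable hZmeas]

lemma not_indepSet_eval_le (hC : C.PosDef) (hZ : P.map Z = gaussianMeasure C) {i j : ι}
    (hij : i ≠ j) (hCij : C i j ≠ 0) (a b : ℝ) :
    ¬ IndepSet {ω | Z ω i ≤ a} {ω | Z ω j ≤ b} P := by
  have hlaw := hasGaussianLaw_of_map_eq_gaussianMeasure hC hZ
  have := hlaw.isProbabilityMeasure
  have hvar : Var[fun ω ↦ Z ω i; P] ≠ 0 := by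
    rw [← covariance_self (hlaw.eval i).aemeasurable,
      covariance_eval_of_map_eq_gaussianMeasure hC hZ]
    exact hC.diag_pos.ne'
  have hcov : cov[fun ω ↦ Z ω i, fun ω ↦ Z ω j; P] ≠ 0 := by
    rwa [covariance_eval_of_map_eq_gaussianMeasure hC hZ]
  exact not_indepSet_le_of_indepFun_sub_mul (hlaw.eval i).aemeasurable (hlaw.eval j).aemeasurable
    (isOpenPosMeasure_map_eval_eval hlaw.aemeasurable
      (hZ ▸ isOpenPosMeasure_gaussianMeasure hC) hij)
    (div_ne_zero hcov hvar) (indepFun_sub_covariance_div_variance_mul (hlaw.prodMk i j) hvar) a b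

end GaussianVector

theorem gaussian_copula_pairwise_independence_general {ι : Type*} [Fintype ι] [DecidableEq ι]
    {C : Matrix ι ι ℝ} (hC : C.PosDef) {Ω : Type*} [MeasurableSpace Ω] {P : Measure Ω}
    {Z : Ω → ι → ℝ} (hZ : P.map Z = gaussianMeasure C) {F G : ℝ → ℝ} (hF : IsCDF F) (hG : IsCDF G)
    {i j : ι} (hij : i ≠ j) :
    (C i j = 0 →
      IndepFun (fun ω ↦ pseudoInv F (Phi (Z ω i))) (fun ω ↦ pseudoInv G (Phi (Z ω j))) P) ∧
    (¬ IsDegenerateCDF F → ¬ IsDegenerateCDF G →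
      IndepFun (fun ω ↦ pseudoInv F (Phi (Z ω i))) (fun ω ↦ pseudoInv G (Phi (Z ω j))) P →
      C i j = 0) := by
  refine ⟨fun hCij ↦ ?_, fun hFdeg hGdeg hind ↦ ?_⟩
  · have hpair := (hasGaussianLaw_of_map_eq_gaussianMeasure hC hZ).prodMk i j
    have hcov := (covariance_eval_of_map_eq_gaussianMeasure hC hZ i j).trans hCij
    exact (hpair.indepFun_of_covariance_eq_zero hcov).comp
      hF.monotone_pseudoInv_comp_Phi.measurable hG.monotone_pseudoInv_comp_Phi.measurable
  · by_contra hCij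
    obtain ⟨s, a, hsa⟩ := hF.exists_forall_pseudoInv_Phi_le_iff hFdeg
    obtain ⟨t, b, htb⟩ := hG.exists_forall_pseudoInv_Phi_le_iff hGdeg
    refine not_indepSet_eval_le hC hZ hij hCij a b ?_
    simpa only [Set.preimage, Set.mem_Iic, hsa, htb] using
      indepSet_preimage_of_indepFun hind (measurableSet_Iic (a := s)) (measurableSet_Iic (a := t))

/-- in a Gaussian copula model `Y_j = F_j⁻(Φ(Z_j))` with `Z ~ N_p(0, C)` and
`j ≠ j'`: (i) if `c_{jj'} = 0` then `Y_j` and `Y_{j'}` are independent; (ii) if moreover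
`F_j` and `F_{j'}` are continuous and non-degenerate, then independence of `Y_j` and
`Y_{j'}` forces `c_{jj'} = 0`. -/
theorem gaussian_copula_pairwise_independence (p : ℕ) (hp : 1 ≤ p)
    (C : Matrix (Fin p) (Fin p) ℝ) (hC : C.PosDef) (hCcorr : ∀ j, C j j = 1)
    {α : Type*} [MeasurableSpace α] (P : Measure α) [IsProbabilityMeasure P]
    (Z : α → Fin p → ℝ) (hZmeas : Measurable Z) (hZlaw : P.map Z = gaussianMeasure C)
    (F : Fin p → ℝ → ℝ) (hF : ∀ j, IsCDF (F j))
    (j j' : Fin p) (hjj' : j ≠ j') :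
    (C j j' = 0 →
      IndepFun (fun ω => pseudoInv (F j) (Phi (Z ω j)))
        (fun ω => pseudoInv (F j') (Phi (Z ω j'))) P) ∧
    (Continuous (F j) → Continuous (F j') →
      ¬ IsDegenerateCDF (F j) → ¬ IsDegenerateCDF (F j') →
      IndepFun (fun ω => pseudoInv (F j) (Phi (Z ω j)))
        (fun ω => pseudoInv (F j') (Phi (Z ω j'))) P →
      C j j' = 0) := by
  have h := gaussian_copula_pairwise_independence_general hC hZlaw (hF j) (hF j') hjj'
  exact ⟨h.1, fun _ _ ↦ h.2⟩
end

section
/- Let (Z_1, Z_2) be bivariate Gaussian with mean zero, unit variances and correlation ρ. Let f, g : ℝ → ℝ be Borel measurable functions such that f(Z_1) and g(Z_2) have finite, strictly positive variances. Then |Corr(f(Z_1), g(Z_2))| ≤ |ρ|. In particular, in a bivariate Gaussian copula model Y_1 = F_1⁻(Φ(Z_1)), Y_2 = F_2⁻(Φ(Z_2)) with copula correlation parameter c = ρ and margins of finite positive variance, the copula parameter c is an upper bound in absolute value on the Pearson correlation Corr(Y_1, Y_2). -/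
open MeasureTheory ProbabilityTheory Real

/-! Let `X`, `W` be independent with centred Gaussian law `μ`, and `a ^ 2 + b ^ 2 = 1`. Conditioning
on `X` gives `cov(f(X), g(a X + b W)) = cov_μ(f, M g)`, where `M` is the Mehler operator, so it
suffices to show that `M` multiplies standard deviations by at most `|a|`. The law of `(X, W)` is
invariant under reflections, so the pair `(X, a X + b W)` is exchangeable and `M` is symmetric;
Cauchy–Schwarz then makes the sequence `n ↦ √Var(M ^ n h)` log-convex. Since `M` multiplies
Lipschitz constants by `|a|`, for Lipschitz `h` this sequence is `O(|a| ^ n)`, and log-convexity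
transfers the asymptotic rate to the first step: `√Var(M h) ≤ |a| √Var(h)`. Lipschitz functions
are dense in `L²`.
-/

open Filter
open scoped ENNReal NNReal Topology

section LogConvex

variable {a : ℕ → ℝ}

theorem mul_le_succ_of_sq_le_mul (ha : ∀ n, 0 ≤ a n)
    (hlog : ∀ n, a (n + 1) ^ 2 ≤ a n * a (n + 2)) {q : ℝ} (hq : q * a 0 ≤ a 1) (n : ℕ) :
    q * a n ≤ a (n + 1) := by
  induction n with
  | zero => exact hq
  | succ n ih =>
    rcases (ha n).eq_or_lt with hn | hn
    · have hzero : a (n + 1) = 0 := by simpa [← hn, sq_nonpos_iff] using hlog n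
      simpa [hzero] using ha (n + 2)
    · refine le_of_mul_le_mul_left ?_ hn
      calc a n * (q * a (n + 1)) = q * a n * a (n + 1) := by ring
        _ ≤ a (n + 1) * a (n + 1) := by gcongr; exact ha _
        _ = a (n + 1) ^ 2 := (sq _).symm
        _ ≤ a n * a (n + 2) := hlog n

theorem le_mul_of_sq_le_mul_of_le_geom (ha : ∀ n, 0 ≤ a n)
    (hlog : ∀ n, a (n + 1) ^ 2 ≤ a n * a (n + 2)) {C r : ℝ} (hr : 0 ≤ r)
    (hgeom : ∀ n, a n ≤ C * r ^ n) : a 1 ≤ r * a 0 := by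
  rcases (ha 0).eq_or_lt with h0 | h0
  · have hone : a 1 = 0 := by simpa [← h0, sq_nonpos_iff] using hlog 0
    simp [hone, ← h0]
  by_contra! hlt
  set q := a 1 / a 0
  have hrq : r < q := (lt_div_iff₀ h0).2 hlt
  have hq : 0 < q := hr.trans_lt hrq
  have hgrowth (n : ℕ) : q ^ n * a 0 ≤ a n :=
    geom_le hq.le n fun k _ =>
      mul_le_succ_of_sq_le_mul ha hlog (div_mul_cancel₀ _ h0.ne').le k
  have hdecay (n : ℕ) : a 0 ≤ C * (r / q) ^ n := by
    rw [div_pow, ← mul_div_assoc, le_div_iff₀ (pow_pos hq n), mul_comm]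
    exact (hgrowth n).trans (hgeom n)
  have hlim : Tendsto (fun n => C * (r / q) ^ n) atTop (𝓝 (C * 0)) :=
    (tendsto_pow_atTop_nhds_zero_of_lt_one (by positivity) ((div_lt_one hq).2 hrq)).const_mul C
  exact h0.not_ge (by simpa using ge_of_tendsto' hlim hdecay)

end LogConvex

section Covariance

variable {Ω : Type*} [MeasurableSpace Ω] {P : Measure Ω} {X Y : Ω → ℝ}

theorem sq_covariance_le_variance_mul_variance [IsFiniteMeasure P] (hX : MemLp X 2 P)
    (hY : MemLp Y 2 P) : cov[X, Y; P] ^ 2 ≤ Var[X; P] * Var[Y; P] := by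
  have hdiscrim : discrim Var[Y; P] (2 * cov[X, Y; P]) Var[X; P] ≤ 0 :=
    discrim_le_zero fun t => by
      have hvar : Var[X + t • Y; P] =
          Var[Y; P] * (t * t) + 2 * cov[X, Y; P] * t + Var[X; P] := by
        rw [variance_add hX (hY.const_smul t), variance_smul, covariance_smul_right]
        ring
      exact hvar ▸ variance_nonneg _ P
  rw [discrim] at hdiscrim
  linarith

theorem abs_covariance_le_sqrt_variance_mul_sqrt_variance [IsFiniteMeasure P]
    (hX : MemLp X 2 P) (hY : MemLp Y 2 P) : |cov[X, Y; P]| ≤ √Var[X; P] * √Var[Y; P] := by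
  rw [← Real.sqrt_mul (variance_nonneg X P)]
  exact Real.abs_le_sqrt (sq_covariance_le_variance_mul_variance hX hY)

theorem sqrt_variance_sub_le [IsFiniteMeasure P] (hX : MemLp X 2 P) (hY : MemLp Y 2 P) :
    √Var[X - Y; P] ≤ √Var[X; P] + √Var[Y; P] := by
  refine Real.sqrt_le_iff.2 ⟨by positivity, ?_⟩
  have hcov := neg_le_of_abs_le (abs_covariance_le_sqrt_variance_mul_sqrt_variance hX hY)
  rw [variance_sub hX hY, add_sq, Real.sq_sqrt (variance_nonneg X P),
    Real.sq_sqrt (variance_nonneg Y P)]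
  linarith

theorem sqrt_variance_le_of_eLpNorm_le [IsProbabilityMeasure P] (hX : MemLp X 2 P) {ε : ℝ}
    (hε : 0 ≤ ε) (h : eLpNorm X 2 P ≤ ENNReal.ofReal ε) : √Var[X; P] ≤ ε := by
  have hnorm : √(∫ ω, X ω ^ 2 ∂P) ≤ ε := by
    rw [hX.eLpNorm_eq_integral_rpow_norm (by simp) (by simp), ENNReal.ofReal_le_ofReal_iff hε] at h
    simpa [Real.sqrt_eq_rpow] using h
  exact (Real.sqrt_le_sqrt (variance_le_expectation_sq hX.aestronglyMeasurable)).trans hnorm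

theorem covariance_comp_fst_prod {α β : Type*} [MeasurableSpace α] [MeasurableSpace β]
    {μ : Measure α} {ν : Measure β} [IsProbabilityMeasure μ] [IsProbabilityMeasure ν]
    {f : α → ℝ} {U : α × β → ℝ} (hf : MemLp f 2 μ) (hU : MemLp U 2 (μ.prod ν)) :
    cov[fun p => f p.1, U; μ.prod ν] = cov[f, fun x => ∫ y, U (x, y) ∂ν; μ] := by
  have hU_int : Integrable U (μ.prod ν) := hU.integrable one_le_two
  have hf_fst : MemLp (fun p : α × β => f p.1) 2 (μ.prod ν) :=
    hf.comp_measurePreserving measurePreserving_fst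
  have hf_mean : ∫ p, f p.1 ∂μ.prod ν = ∫ x, f x ∂μ := by simp [integral_fun_fst]
  have hprod := (hf_fst.sub (memLp_const (∫ x, f x ∂μ))).integrable_mul
    (hU.sub (memLp_const (∫ p, U p ∂μ.prod ν)))
  rw [covariance, covariance, hf_mean, ← integral_prod U hU_int]
  refine (integral_prod _ hprod).trans (integral_congr_ae ?_)
  filter_upwards [hU_int.prod_right_ae] with x hx
  simp [integral_const_mul, integral_sub hx (integrable_const _)]

end Covariance

section HasLaw

variable {Ω α : Type*} [MeasurableSpace Ω] [MeasurableSpace α] {P : Measure Ω} {μ : Measure α}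
  {X : Ω → α} {f : α → ℝ}

theorem memLp_comp_iff_of_hasLaw (hX : HasLaw X μ P) {p : ℝ≥0∞}
    (hf : AEStronglyMeasurable f μ) : MemLp (fun ω => f (X ω)) p P ↔ MemLp f p μ := by
  obtain ⟨hX_meas, rfl⟩ := hX
  exact (memLp_map_measure_iff hf hX_meas).symm

theorem variance_comp_of_hasLaw (hX : HasLaw X μ P) (hf : AEMeasurable f μ) :
    Var[fun ω => f (X ω); P] = Var[f; μ] := by
  obtain ⟨hX_meas, rfl⟩ := hX
  exact (variance_map hf hX_meas).symm

end HasLaw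

section LipschitzContraction

theorem lipschitzWith_iterate_of_contraction {α β : Type*} [PseudoEMetricSpace α]
    [PseudoEMetricSpace β] {T : (α → β) → α → β} {r K : ℝ≥0} {h : α → β}
    (hlip : ∀ (K : ℝ≥0) (u : α → β), LipschitzWith K u → LipschitzWith (r * K) (T u))
    (hh : LipschitzWith K h) (n : ℕ) : LipschitzWith (r ^ n * K) (T^[n] h) := by
  induction n with
  | zero => simpa using hh
  | succ n ih => simpa only [Function.iterate_succ_apply', pow_succ', mul_assoc] using hlip _ _ ih

variable {E : Type*} [NormedAddCommGroup E] [MeasurableSpace E] {μ : Measure E}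
  {K : ℝ≥0}

theorem memLp_of_lipschitzWith [IsFiniteMeasure μ] {F : Type*} [NormedAddCommGroup F]
    {h : E → F} {p : ℝ≥0∞} (hμ : MemLp id p μ) (hh : LipschitzWith K h) : MemLp h p μ := by
  have hsub : LipschitzWith K fun x => h x - h 0 :=
    LipschitzWith.of_dist_le_mul fun x y => by simpa using hh.dist_le_mul x y
  simpa [Pi.add_def] using (hsub.comp_memLp (sub_self _) hμ).add (memLp_const (h 0))

theorem variance_le_of_lipschitzWith [IsProbabilityMeasure μ] (hμ : MemLp id 2 μ)
    {h : E → ℝ} (hh : LipschitzWith K h) : Var[h; μ] ≤ (K : ℝ) ^ 2 * ∫ x, ‖x‖ ^ 2 ∂μ := by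
  have hh_memLp := memLp_of_lipschitzWith hμ hh
  rw [← variance_sub_const hh_memLp.aestronglyMeasurable (h 0), ← integral_const_mul]
  refine (variance_le_expectation_sq
    (hh_memLp.aestronglyMeasurable.sub aestronglyMeasurable_const)).trans ?_
  refine integral_mono (hh_memLp.sub (memLp_const (h 0))).integrable_sq
    (hμ.norm.integrable_sq.const_mul _) fun x => ?_
  simp only [Pi.pow_apply, Pi.sub_apply]
  rw [← mul_pow, ← sq_abs, ← Real.dist_eq, ← dist_zero_right]
  exact pow_le_pow_left₀ dist_nonneg (hh.dist_le_mul x 0) 2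

theorem sqrt_variance_le_of_lipschitz_contraction [IsProbabilityMeasure μ] (hμ : MemLp id 2 μ)
    {T : (E → ℝ) → E → ℝ} {r : ℝ≥0} {h : E → ℝ}
    (hlip : ∀ (K : ℝ≥0) (u : E → ℝ), LipschitzWith K u → LipschitzWith (r * K) (T u))
    (hsymm : ∀ (K L : ℝ≥0) (u v : E → ℝ), LipschitzWith K u → LipschitzWith L v →
      cov[T u, v; μ] = cov[u, T v; μ])
    (hh : LipschitzWith K h) : √Var[T h; μ] ≤ r * √Var[h; μ] := by
  have hiter := lipschitzWith_iterate_of_contraction hlip hh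
  have hmem (n : ℕ) : MemLp (T^[n] h) 2 μ := memLp_of_lipschitzWith hμ (hiter n)
  have hlog (n : ℕ) :
      √Var[T^[n + 1] h; μ] ^ 2 ≤ √Var[T^[n] h; μ] * √Var[T^[n + 2] h; μ] :=
    calc √Var[T^[n + 1] h; μ] ^ 2 = cov[T^[n + 1] h, T^[n + 1] h; μ] := by
          rw [Real.sq_sqrt (variance_nonneg _ _), covariance_self (hmem _).aemeasurable]
      _ = cov[T^[n] h, T^[n + 2] h; μ] := by
          rw [Function.iterate_succ_apply' T (n + 1), ← hsymm _ _ _ _ (hiter n) (hiter (n + 1)),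
            ← Function.iterate_succ_apply' T n]
      _ ≤ √Var[T^[n] h; μ] * √Var[T^[n + 2] h; μ] :=
          (le_abs_self _).trans
            (abs_covariance_le_sqrt_variance_mul_sqrt_variance (hmem n) (hmem (n + 2)))
  refine le_mul_of_sq_le_mul_of_le_geom (a := fun n => √Var[T^[n] h; μ])
    (C := K * √(∫ x, ‖x‖ ^ 2 ∂μ)) (fun n => Real.sqrt_nonneg _) hlog r.coe_nonneg fun n => ?_
  calc √Var[T^[n] h; μ] ≤ √(((r ^ n * K : ℝ≥0) : ℝ) ^ 2 * ∫ x, ‖x‖ ^ 2 ∂μ) :=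
        Real.sqrt_le_sqrt (variance_le_of_lipschitzWith hμ (hiter n))
    _ = K * √(∫ x, ‖x‖ ^ 2 ∂μ) * r ^ n := by
        rw [Real.sqrt_mul (sq_nonneg _), Real.sqrt_sq (NNReal.coe_nonneg _)]
        push_cast
        ring

end LipschitzContraction

section Density

variable {E : Type*} [NormedAddCommGroup E] [NormedSpace ℝ E] [FiniteDimensional ℝ E]
  [MeasurableSpace E] [BorelSpace E]

theorem exists_lipschitzWith_eLpNorm_sub_le {μ : Measure E} [IsFiniteMeasureOnCompacts μ]
    {F : Type*} [NormedAddCommGroup F] [NormedSpace ℝ F] {p : ℝ≥0∞} (hp : p ≠ ∞)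
    (hp_one : 1 ≤ p) {g : E → F} (hg : MemLp g p μ) {ε : ℝ} (hε : 0 < ε) :
    ∃ (K : ℝ≥0) (h : E → F), LipschitzWith K h ∧ MemLp h p μ ∧
      eLpNorm (g - h) p μ ≤ ENNReal.ofReal ε := by
  obtain ⟨h, hh_supp, hh_smooth, hgh⟩ := hg.exist_eLpNorm_sub_le hp hp_one hε
  obtain ⟨K, hK⟩ := hh_smooth.lipschitzWith_of_hasCompactSupport hh_supp (by simp)
  exact ⟨K, h, hK, hh_smooth.continuous.memLp_of_hasCompactSupport hh_supp, hgh⟩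

theorem abs_covariance_comp_le_of_forall_lipschitzWith {Ω : Type*} [MeasurableSpace Ω]
    {P : Measure Ω} [IsProbabilityMeasure P] {μ : Measure E} {U : Ω → ℝ} {Y : Ω → E}
    (hU : MemLp U 2 P) (hY : MeasurePreserving Y P μ) {c : ℝ} (hc : 0 ≤ c)
    (hlip : ∀ (K : ℝ≥0) (h : E → ℝ), LipschitzWith K h →
      |cov[U, h ∘ Y; P]| ≤ c * √Var[h ∘ Y; P])
    {g : E → ℝ} (hg : MemLp g 2 μ) : |cov[U, g ∘ Y; P]| ≤ c * √Var[g ∘ Y; P] := by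
  have : IsProbabilityMeasure μ := hY.map_eq ▸ Measure.isProbabilityMeasure_map hY.aemeasurable
  have happrox (ε : ℝ) (hε : 0 < ε) :
      |cov[U, g ∘ Y; P]| ≤ c * (√Var[g ∘ Y; P] + ε) + √Var[U; P] * ε := by
    obtain ⟨K, h, hK, hh, hgh⟩ := exists_lipschitzWith_eLpNorm_sub_le (by simp) one_le_two hg hε
    have hgY := hg.comp_measurePreserving hY
    have hdY : MemLp (g ∘ Y - h ∘ Y) 2 P := hgY.sub (hh.comp_measurePreserving hY)
    have hd_le : √Var[g ∘ Y - h ∘ Y; P] ≤ ε := by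
      refine sqrt_variance_le_of_eLpNorm_le hdY hε.le ?_
      rwa [← Pi.sub_comp, eLpNorm_comp_measurePreserving (hg.sub hh).aestronglyMeasurable hY]
    have hh_le : √Var[h ∘ Y; P] ≤ √Var[g ∘ Y; P] + ε := by
      simpa using (sqrt_variance_sub_le hgY hdY).trans (add_le_add_right hd_le _)
    calc |cov[U, g ∘ Y; P]| = |cov[U, h ∘ Y; P] + cov[U, g ∘ Y - h ∘ Y; P]| := by
          rw [← covariance_add_right hU (hh.comp_measurePreserving hY) hdY, add_sub_cancel]
      _ ≤ |cov[U, h ∘ Y; P]| + |cov[U, g ∘ Y - h ∘ Y; P]| := abs_add_le _ _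
      _ ≤ c * √Var[h ∘ Y; P] + √Var[U; P] * √Var[g ∘ Y - h ∘ Y; P] :=
          add_le_add (hlip K h hK)
            (abs_covariance_le_sqrt_variance_mul_sqrt_variance hU hdY)
      _ ≤ c * (√Var[g ∘ Y; P] + ε) + √Var[U; P] * ε := by gcongr
  have hlim : Tendsto (fun ε => c * (√Var[g ∘ Y; P] + ε) + √Var[U; P] * ε) (𝓝[>] 0)
      (𝓝 (c * (√Var[g ∘ Y; P] + 0) + √Var[U; P] * 0)) :=
    (Continuous.tendsto (by fun_prop) 0).mono_left nhdsWithin_le_nhds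
  simpa using ge_of_tendsto hlim (eventually_mem_nhdsWithin.mono happrox)

end Density

section Mehler

variable {E : Type*} [NormedAddCommGroup E] [NormedSpace ℝ E] [MeasurableSpace E]

/-- The Ornstein–Uhlenbeck (Mehler) operator. When `μ` is a centred Gaussian measure and
`a ^ 2 + b ^ 2 = 1`, it is the Markov operator of the stationary pair `(X, a • X + b • W)`, with
`X` and `W` independent of law `μ`. The coefficients are kept separate so that no square root
`b = √(1 - a ^ 2)` appears. -/
noncomputable def mehler (μ : Measure E) (a b : ℝ) (h : E → ℝ) (x : E) : ℝ :=
  ∫ w, h (a • x + b • w) ∂μ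

variable {μ : Measure E} {a b : ℝ}

theorem lipschitzWith_mehler [BorelSpace E] [IsProbabilityMeasure μ] (hμ : Integrable id μ)
    {K : ℝ≥0} {h : E → ℝ} (hh : LipschitzWith K h) :
    LipschitzWith (‖a‖₊ * K) (mehler μ a b h) := by
  have hint (x : E) : Integrable (fun w => h (a • x + b • w)) μ := by
    have hlip : LipschitzWith (K * ‖b‖₊) fun w => h (a • x + b • w) :=
      hh.comp (by simpa using (LipschitzWith.const (a • x)).add (lipschitzWith_smul b))
    exact memLp_one_iff_integrable.1
      (memLp_of_lipschitzWith (memLp_one_iff_integrable.2 hμ) hlip)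
  refine LipschitzWith.of_dist_le_mul fun x y => ?_
  rw [dist_eq_norm, mehler, mehler, ← integral_sub (hint x) (hint y)]
  refine (norm_integral_le_of_norm_le_const (ae_of_all μ fun w => ?_)).trans
    (by rw [probReal_univ, mul_one])
  calc ‖h (a • x + b • w) - h (a • y + b • w)‖
      ≤ K * dist (a • x + b • w) (a • y + b • w) := hh.dist_le_mul _ _
    _ = (‖a‖₊ * K : ℝ≥0) * dist x y := by
        rw [dist_add_right, dist_smul₀]
        push_cast
        ring

variable [BorelSpace E] [CompleteSpace E] [SecondCountableTopology E] [IsGaussian μ]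

theorem measurePreserving_reflection (hμ : ∫ x, x ∂μ = 0) (hab : a ^ 2 + b ^ 2 = 1) :
    MeasurePreserving (fun p : E × E => (a • p.1 + b • p.2, b • p.1 - a • p.2))
      (μ.prod μ) (μ.prod μ) := by
  -- The reflection is the rotation with cosine `b` and sine `-a`, followed by the swap.
  set z : ℂ := ⟨b, -a⟩
  have hz : ‖z‖ = 1 := by
    rw [← sq_eq_sq₀ (norm_nonneg z) zero_le_one, Complex.sq_norm, Complex.normSq_mk]
    linear_combination hab
  have hcos : Real.cos z.arg = b := by simpa [hz] using Complex.norm_mul_cos_arg z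
  have hsin : Real.sin z.arg = -a := by simpa [hz] using Complex.norm_mul_sin_arg z
  have hrotation : MeasurePreserving (ContinuousLinearMap.rotation z.arg) (μ.prod μ) (μ.prod μ) :=
    ⟨by fun_prop, IsGaussian.map_rotation_eq_self hμ _⟩
  convert Measure.measurePreserving_swap.comp hrotation using 1
  ext p <;> simp [ContinuousLinearMap.rotation_apply, hcos, hsin, sub_eq_neg_add, add_comm]

theorem measurePreserving_smul_add_smul (hμ : ∫ x, x ∂μ = 0) (hab : a ^ 2 + b ^ 2 = 1) :
    MeasurePreserving (fun p : E × E => a • p.1 + b • p.2) (μ.prod μ) μ :=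
  measurePreserving_fst.comp (measurePreserving_reflection hμ hab)

variable {f g : E → ℝ}

theorem covariance_comp_smul_add_smul_comm (hμ : ∫ x, x ∂μ = 0) (hab : a ^ 2 + b ^ 2 = 1)
    (hf : MemLp f 2 μ) (hg : MemLp g 2 μ) :
    cov[fun p => f p.1, fun p => g (a • p.1 + b • p.2); μ.prod μ] =
      cov[fun p => g p.1, fun p => f (a • p.1 + b • p.2); μ.prod μ] := by
  have hR := measurePreserving_reflection hμ hab
  have hf_fst : AEStronglyMeasurable (fun p : E × E => f p.1) (μ.prod μ) :=
    hf.aestronglyMeasurable.comp_measurePreserving measurePreserving_fst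
  have hg_sum : AEStronglyMeasurable (fun p : E × E => g (a • p.1 + b • p.2)) (μ.prod μ) :=
    hg.aestronglyMeasurable.comp_measurePreserving (measurePreserving_smul_add_smul hμ hab)
  have hinvol (p : E × E) : a • (a • p.1 + b • p.2) + b • (b • p.1 - a • p.2) = p.1 := by
    calc _ = (a ^ 2 + b ^ 2) • p.1 := by module
      _ = p.1 := by rw [hab, one_smul]
  rw [← hR.map_eq] at hf_fst hg_sum
  rw [← hR.map_eq, covariance_map_fun hf_fst hg_sum hR.aemeasurable, hR.map_eq, covariance_comm]
  simp only [hinvol]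

theorem covariance_mehler_right (hμ : ∫ x, x ∂μ = 0) (hab : a ^ 2 + b ^ 2 = 1)
    (hf : MemLp f 2 μ) (hg : MemLp g 2 μ) :
    cov[f, mehler μ a b g; μ] =
      cov[fun p => f p.1, fun p => g (a • p.1 + b • p.2); μ.prod μ] :=
  (covariance_comp_fst_prod hf
    (hg.comp_measurePreserving (measurePreserving_smul_add_smul hμ hab))).symm

theorem covariance_mehler_comm (hμ : ∫ x, x ∂μ = 0) (hab : a ^ 2 + b ^ 2 = 1)
    (hf : MemLp f 2 μ) (hg : MemLp g 2 μ) :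
    cov[mehler μ a b f, g; μ] = cov[f, mehler μ a b g; μ] := by
  rw [covariance_comm, covariance_mehler_right hμ hab hg hf, covariance_mehler_right hμ hab hf hg,
    covariance_comp_smul_add_smul_comm hμ hab hg hf]

theorem sqrt_variance_mehler_le (hμ : ∫ x, x ∂μ = 0) (hab : a ^ 2 + b ^ 2 = 1) {K : ℝ≥0}
    {h : E → ℝ} (hh : LipschitzWith K h) :
    √Var[mehler μ a b h; μ] ≤ |a| * √Var[h; μ] :=
  have hmem {L : ℝ≥0} {u : E → ℝ} (hu : LipschitzWith L u) : MemLp u 2 μ :=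
    memLp_of_lipschitzWith IsGaussian.memLp_two_id hu
  sqrt_variance_le_of_lipschitz_contraction (r := ‖a‖₊) IsGaussian.memLp_two_id
    (fun _ _ hu => lipschitzWith_mehler IsGaussian.integrable_id hu)
    (fun _ _ _ _ hu hv => covariance_mehler_comm hμ hab (hmem hu) (hmem hv)) hh

theorem abs_covariance_comp_smul_add_smul_le_of_lipschitzWith (hμ : ∫ x, x ∂μ = 0)
    (hab : a ^ 2 + b ^ 2 = 1) (hf : MemLp f 2 μ) {K : ℝ≥0} {h : E → ℝ} (hh : LipschitzWith K h) :
    |cov[fun p => f p.1, fun p => h (a • p.1 + b • p.2); μ.prod μ]| ≤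
      |a| * √Var[f; μ] * √Var[h; μ] := by
  have hμ_two : MemLp id 2 μ := IsGaussian.memLp_two_id
  have hMh : MemLp (mehler μ a b h) 2 μ :=
    memLp_of_lipschitzWith hμ_two (lipschitzWith_mehler IsGaussian.integrable_id hh)
  rw [← covariance_mehler_right hμ hab hf (memLp_of_lipschitzWith hμ_two hh)]
  calc |cov[f, mehler μ a b h; μ]| ≤ √Var[f; μ] * √Var[mehler μ a b h; μ] :=
        abs_covariance_le_sqrt_variance_mul_sqrt_variance hf hMh
    _ ≤ √Var[f; μ] * (|a| * √Var[h; μ]) := by gcongr; exact sqrt_variance_mehler_le hμ hab hh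
    _ = |a| * √Var[f; μ] * √Var[h; μ] := by ring

theorem abs_covariance_comp_smul_add_smul_le [FiniteDimensional ℝ E] (hμ : ∫ x, x ∂μ = 0)
    (hab : a ^ 2 + b ^ 2 = 1) (hf : MemLp f 2 μ) (hg : MemLp g 2 μ) :
    |cov[fun p => f p.1, fun p => g (a • p.1 + b • p.2); μ.prod μ]| ≤
      |a| * √Var[f; μ] * √Var[g; μ] := by
  have hY := measurePreserving_smul_add_smul hμ hab
  have hvar {u : E → ℝ} (hu : MemLp u 2 μ) :
      Var[u ∘ fun p : E × E => a • p.1 + b • p.2; μ.prod μ] = Var[u; μ] :=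
    hY.variance_fun_comp hu.aemeasurable
  rw [← hvar hg]
  refine abs_covariance_comp_le_of_forall_lipschitzWith
    (hf.comp_measurePreserving measurePreserving_fst) hY (by positivity) (fun K h hh => ?_) hg
  rw [hvar (memLp_of_lipschitzWith IsGaussian.memLp_two_id hh)]
  exact abs_covariance_comp_smul_add_smul_le_of_lipschitzWith hμ hab hf hh

end Mehler

theorem gebelein_maximal_correlation_bound_general {E Ω : Type*} [NormedAddCommGroup E]
    [NormedSpace ℝ E] [FiniteDimensional ℝ E] [MeasurableSpace E] [BorelSpace E]
    [MeasurableSpace Ω] {P : Measure Ω} {μ : Measure E} [IsGaussian μ] (hμ : ∫ x, x ∂μ = 0)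
    {Z W : Ω → E} (hZ : HasLaw Z μ P) (hW : HasLaw W μ P) (hZW : IndepFun Z W P)
    {a b : ℝ} (hab : a ^ 2 + b ^ 2 = 1) {f g : E → ℝ} (hf : AEStronglyMeasurable f μ)
    (hg : AEStronglyMeasurable g μ) (hfZ : MemLp (fun ω => f (Z ω)) 2 P)
    (hgY : MemLp (fun ω => g (a • Z ω + b • W ω)) 2 P) :
    |cov[fun ω => f (Z ω), fun ω => g (a • Z ω + b • W ω); P]| ≤
      |a| * √(Var[fun ω => f (Z ω); P] * Var[fun ω => g (a • Z ω + b • W ω); P]) := by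
  have : IsProbabilityMeasure P := hZ.isProbabilityMeasure
  have : CompleteSpace E := FiniteDimensional.complete ℝ E
  have : ProperSpace E := FiniteDimensional.proper_real E
  have hjoint : HasLaw (fun ω => (Z ω, W ω)) (μ.prod μ) P := hZW.hasLaw_prod hZ hW
  have hsum := measurePreserving_smul_add_smul hμ hab
  have hY : HasLaw (fun ω => a • Z ω + b • W ω) μ P := hsum.comp_hasLaw hjoint
  rw [variance_comp_of_hasLaw hZ hf.aemeasurable, variance_comp_of_hasLaw hY hg.aemeasurable,
    Real.sqrt_mul (variance_nonneg f μ), ← mul_assoc,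
    hjoint.covariance_fun_comp (f := fun p => f p.1) (g := fun p => g (a • p.1 + b • p.2))
      (hf.comp_measurePreserving measurePreserving_fst).aemeasurable
      (hg.comp_measurePreserving hsum).aemeasurable]
  exact abs_covariance_comp_smul_add_smul_le hμ hab ((memLp_comp_iff_of_hasLaw hZ hf).1 hfZ)
    ((memLp_comp_iff_of_hasLaw hY hg).1 hgY)

/-- Gebelein's maximal correlation bound: if `(Z₁, Z₂)` is bivariate
standard Gaussian with correlation `ρ` (realized as `Z₁ = Z`, `Z₂ = ρZ + √(1−ρ²)W`
with `Z, W` independent standard normals) and `f, g` are Borel functions such that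
`f(Z₁)` and `g(Z₂)` are square-integrable with strictly positive variances, then
`|Corr(f(Z₁), g(Z₂))| ≤ |ρ|`.  In particular, in a bivariate Gaussian copula model
the copula correlation parameter bounds the Pearson correlation in absolute value. -/
theorem gebelein_maximal_correlation_bound {Ω : Type*} [MeasurableSpace Ω]
    (P : Measure Ω) [IsProbabilityMeasure P]
    (Z W : Ω → ℝ) (hZ : Measurable Z) (hW : Measurable W)
    (hZW : IndepFun Z W P)
    (hZlaw : P.map Z = gaussianReal 0 1) (hWlaw : P.map W = gaussianReal 0 1)
    (ρ : ℝ) (hρ : |ρ| ≤ 1) (f g : ℝ → ℝ) (hf : Measurable f) (hg : Measurable g)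
    (hfL2 : Integrable (fun ω => (f (Z ω)) ^ 2) P)
    (hgL2 : Integrable (fun ω => (g (ρ * Z ω + Real.sqrt (1 - ρ ^ 2) * W ω)) ^ 2) P)
    (hfvar : 0 < variance (fun ω => f (Z ω)) P)
    (hgvar : 0 < variance (fun ω => g (ρ * Z ω + Real.sqrt (1 - ρ ^ 2) * W ω)) P) :
    |∫ ω, (f (Z ω) - ∫ ω', f (Z ω') ∂P) *
          (g (ρ * Z ω + Real.sqrt (1 - ρ ^ 2) * W ω) -
            ∫ ω', g (ρ * Z ω' + Real.sqrt (1 - ρ ^ 2) * W ω') ∂P) ∂P| /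
        Real.sqrt (variance (fun ω => f (Z ω)) P *
          variance (fun ω => g (ρ * Z ω + Real.sqrt (1 - ρ ^ 2) * W ω)) P)
      ≤ |ρ| := by
  have hab : ρ ^ 2 + √(1 - ρ ^ 2) ^ 2 = 1 := by
    rw [Real.sq_sqrt (sub_nonneg.2 ((sq_le_one_iff_abs_le_one ρ).2 hρ)), add_sub_cancel]
  exact div_le_of_le_mul₀ (Real.sqrt_nonneg _) (abs_nonneg ρ) <|
    gebelein_maximal_correlation_bound_general integral_id_gaussianReal ⟨hZ.aemeasurable, hZlaw⟩
      ⟨hW.aemeasurable, hWlaw⟩ hZW hab hf.aestronglyMeasurable hg.aestronglyMeasurable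
      ((memLp_two_iff_integrable_sq (hf.comp hZ).aestronglyMeasurable).2 hfL2)
      ((memLp_two_iff_integrable_sq (hg.comp (by fun_prop)).aestronglyMeasurable).2 hgL2)
end
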